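/- For every dimension d ≥ 1 and every M > 0 there exists a constant C > 0, depending only on d and M, such that the following holds: for every μ ∈ ℝ^d with |μ| ≥ 2/3, every η > 0, and every symmetric positive definite matrix Σ ∈ ℝ^{d×d} with ‖Σ‖_op ≤ M and η‖Σ‖_op ≤ 1/6, if ξ is a random vector with the Gaussian distribution N(μ, ηΣ), then E[ e^{|ξ|} · 1_{{|ξ−μ| < 1/3}} ] ≤ e^{|μ| + Cη}. -/

import Mathlib

open MeasureTheory Real
open scoped RealInnerProductSpace

/-- The operator (spectral) norm of a real matrix, viewed as a linear map on
Euclidean space. -/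
noncomputable def matOpNorm {d : ℕ} (A : Matrix (Fin d) (Fin d) ℝ) : ℝ :=
  ‖LinearMap.toContinuousLinearMap (Matrix.toEuclideanLin A)‖

/-- The Gaussian measure on `ℝ^d` with mean `μ` and (positive definite) covariance
matrix `Γ`, defined through its density with respect to Lebesgue measure. -/
noncomputable def gaussianMeasure {d : ℕ} (μ : EuclideanSpace ℝ (Fin d))
    (Γ : Matrix (Fin d) (Fin d) ℝ) : Measure (EuclideanSpace ℝ (Fin d)) :=
  volume.withDensity fun x =>
    ENNReal.ofReal (Real.sqrt (((2 * π) ^ d * Γ.det))⁻¹ *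
      Real.exp (-⟪x - μ, Matrix.toEuclideanLin Γ⁻¹ (x - μ)⟫ / 2))

/-!
Expanding the norm to second order at `μ` gives
`‖x‖ ≤ ‖μ‖ + ⟪μ / ‖μ‖, x - μ⟫ + ‖x - μ‖ ^ 2 / (2 * ‖μ‖)` on the whole space, so no localization near
`μ` is needed: it suffices to integrate the exponential of a quadratic function against the
Gaussian. In an eigenbasis of the covariance matrix `S` the coordinates are independent centred
Gaussians whose variances are the eigenvalues, and each contributes an explicit factor, finite as
soon as its variance is smaller than `‖μ‖`. The linear term only costs `exp (O(‖S‖))`, and not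
`exp (O(√‖S‖))`, because `x - μ` is centred.
-/

open ProbabilityTheory

section WithDensity

lemma measurePreserving_withDensity_comp {α β : Type*} [MeasurableSpace α] [MeasurableSpace β]
    {μ : Measure α} {ν : Measure β} {g : α → β} (hg : MeasurePreserving g μ ν)
    {f : β → ENNReal} (hf : Measurable f) :
    MeasurePreserving g (μ.withDensity fun x => f (g x)) (ν.withDensity f) := by
  refine ⟨hg.measurable, Measure.ext fun s hs => ?_⟩
  rw [Measure.map_apply hg.measurable hs, withDensity_apply _ (hg.measurable hs),
    withDensity_apply _ hs, hg.setLIntegral_comp_preimage hs hf]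

lemma pi_withDensity_ofReal {ι : Type*} [Fintype ι] {α : ι → Type*} [∀ i, MeasurableSpace (α i)]
    {μ : ∀ i, Measure (α i)} [∀ i, SigmaFinite (μ i)] {f : ∀ i, α i → ℝ}
    (hf : ∀ i, Integrable (f i) (μ i)) (hf_nonneg : ∀ i x, 0 ≤ f i x) :
    Measure.pi (fun i => (μ i).withDensity fun x => ENNReal.ofReal (f i x))
      = (Measure.pi μ).withDensity fun x => ENNReal.ofReal (∏ i, f i (x i)) := by
  refine Measure.pi_eq fun s hs => ?_
  have hfs : ∀ i, Integrable (f i) ((μ i).restrict (s i)) := fun i => (hf i).restrict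
  simp_rw [withDensity_apply _ (MeasurableSet.univ_pi hs), withDensity_apply _ (hs _),
    Measure.restrict_pi_pi]
  rw [← ofReal_integral_eq_lintegral_ofReal (Integrable.fintype_prod_dep hfs)
      (ae_of_all _ fun x => Finset.prod_nonneg fun i _ => hf_nonneg i (x i)),
    integral_fintype_prod_eq_prod,
    ENNReal.ofReal_prod_of_nonneg fun i _ => integral_nonneg (hf_nonneg i)]
  exact Finset.prod_congr rfl fun i _ =>
    ofReal_integral_eq_lintegral_ofReal (hfs i) (ae_of_all _ (hf_nonneg i))

end WithDensity

section GaussianReal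

variable {a c : ℝ} {v : NNReal}

lemma exp_quadratic_mul_gaussianPDFReal (hav : a * v < 1) (t : ℝ) :
    gaussianPDFReal 0 v t * exp (c * t + a * t ^ 2 / 2)
      = (√(1 - a * v))⁻¹ * exp (v * c ^ 2 / (2 * (1 - a * v)))
        * gaussianPDFReal (v * c / (1 - a * v)) (v / (1 - a * v)).toNNReal t := by
  have hq : 0 < 1 - a * v := sub_pos.2 hav
  have hq_comm : 1 - v * a ≠ 0 := by rw [mul_comm]; exact hq.ne'
  rcases eq_or_ne v 0 with rfl | hv
  · simp
  have h_normalization : (√(2 * π * v))⁻¹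
      = (√(1 - a * v))⁻¹ * (√(2 * π * (v / (1 - a * v))))⁻¹ := by
    rw [← mul_inv, ← sqrt_mul hq.le]
    congr 2
    field_simp
  have h_exponent : -(t - 0) ^ 2 / (2 * v) + (c * t + a * t ^ 2 / 2)
      = v * c ^ 2 / (2 * (1 - a * v))
        + -(t - v * c / (1 - a * v)) ^ 2 / (2 * (v / (1 - a * v))) := by
    field_simp
    ring
  rw [gaussianPDFReal, gaussianPDFReal, coe_toNNReal _ (by positivity), h_normalization, mul_assoc,
    ← exp_add, h_exponent, exp_add]
  ring

lemma integrable_exp_quadratic_gaussianReal (hav : a * v < 1) :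
    Integrable (fun t => exp (c * t + a * t ^ 2 / 2)) (gaussianReal 0 v) := by
  rcases eq_or_ne v 0 with rfl | hv
  · rw [gaussianReal_zero_var]
    exact integrable_dirac (by simp)
  rw [gaussianReal_of_var_ne_zero 0 hv, integrable_withDensity_iff_integrable_smul'
    (measurable_gaussianPDF 0 v) (ae_of_all _ fun _ => gaussianPDF_lt_top)]
  simp_rw [toReal_gaussianPDF, smul_eq_mul, exp_quadratic_mul_gaussianPDFReal hav]
  exact (integrable_gaussianPDFReal _ _).const_mul _

lemma integral_exp_quadratic_gaussianReal (hav : a * v < 1) :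
    ∫ t, exp (c * t + a * t ^ 2 / 2) ∂(gaussianReal 0 v)
      = (√(1 - a * v))⁻¹ * exp (v * c ^ 2 / (2 * (1 - a * v))) := by
  rcases eq_or_ne v 0 with rfl | hv
  · simp
  have hv' : (v / (1 - a * v)).toNNReal ≠ 0 :=
    (toNNReal_pos.2 (div_pos (by positivity) (sub_pos.2 hav))).ne'
  simp_rw [integral_gaussianReal_eq_integral_smul hv, smul_eq_mul,
    exp_quadratic_mul_gaussianPDFReal hav]
  rw [integral_const_mul, integral_gaussianPDFReal_eq_one _ hv', mul_one]

lemma inv_sqrt_one_sub_le_exp {x : ℝ} (hx : x < 1) : (√(1 - x))⁻¹ ≤ exp (x / (2 * (1 - x))) := by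
  have hx' : 0 < 1 - x := sub_pos.2 hx
  rw [← sqrt_inv, sqrt_le_left (exp_pos _).le, ← exp_nat_mul]
  calc (1 - x)⁻¹ = x / (1 - x) + 1 := by field_simp; ring
    _ ≤ exp (x / (1 - x)) := add_one_le_exp _
    _ = exp ((2 : ℕ) * (x / (2 * (1 - x)))) := by congr 1; push_cast; field_simp

lemma integral_exp_quadratic_gaussianReal_le (hav : a * v < 1) :
    ∫ t, exp (c * t + a * t ^ 2 / 2) ∂(gaussianReal 0 v)
      ≤ exp ((a * v + v * c ^ 2) / (2 * (1 - a * v))) := by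
  rw [integral_exp_quadratic_gaussianReal hav, add_div, exp_add]
  gcongr
  exact inv_sqrt_one_sub_le_exp hav

lemma pi_gaussianReal {ι : Type*} [Fintype ι] {m : ι → ℝ} {v : ι → NNReal} (hv : ∀ i, v i ≠ 0) :
    Measure.pi (fun i => gaussianReal (m i) (v i))
      = volume.withDensity fun y => ENNReal.ofReal (∏ i, gaussianPDFReal (m i) (v i) (y i)) := by
  simp_rw [gaussianReal_of_var_ne_zero _ (hv _), gaussianPDF_def]
  exact pi_withDensity_ofReal (fun i => integrable_gaussianPDFReal _ _)
    fun i => gaussianPDFReal_nonneg _ _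

end GaussianReal

section InnerProductSpace

variable {E : Type*} [NormedAddCommGroup E] [InnerProductSpace ℝ E]

lemma norm_le_norm_add_inner_add_sq {μ : E} (hμ : μ ≠ 0) (x : E) :
    ‖x‖ ≤ ‖μ‖ + (⟪‖μ‖⁻¹ • μ, x - μ⟫ + ‖μ‖⁻¹ * ‖x - μ‖ ^ 2 / 2) := by
  have hx : ‖x‖ ^ 2 = ‖μ‖ ^ 2 + 2 * ⟪μ, x - μ⟫ + ‖x - μ‖ ^ 2 := by
    rw [← norm_add_sq_real, add_sub_cancel]
  have h_rhs : ‖μ‖ + (⟪‖μ‖⁻¹ • μ, x - μ⟫ + ‖μ‖⁻¹ * ‖x - μ‖ ^ 2 / 2)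
      = (‖x‖ ^ 2 + ‖μ‖ ^ 2) / (2 * ‖μ‖) := by
    rw [hx, real_inner_smul_left]
    field_simp
    ring
  rw [h_rhs, le_div_iff₀ (by positivity)]
  linarith [two_mul_le_add_sq ‖x‖ ‖μ‖]

lemma exp_norm_le_mul_exp_quadratic {μ : E} (hμ : μ ≠ 0) (x : E) :
    exp ‖x‖ ≤ exp ‖μ‖ * exp (⟪‖μ‖⁻¹ • μ, x - μ⟫ + ‖μ‖⁻¹ * ‖x - μ‖ ^ 2 / 2) := by
  rw [← exp_add]
  exact exp_le_exp.2 (norm_le_norm_add_inner_add_sq hμ x)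

variable {ι : Type*} [Fintype ι] (b : OrthonormalBasis ι ℝ E)

lemma exp_inner_add_sq_eq_prod (w z : E) (a : ℝ) :
    exp (⟪w, z⟫ + a * ‖z‖ ^ 2 / 2)
      = ∏ i, exp (b.repr w i * b.repr z i + a * b.repr z i ^ 2 / 2) := by
  rw [← exp_sum, Finset.sum_add_distrib, ← Finset.sum_div, ← Finset.mul_sum,
    ← b.repr.inner_map_map, ← b.repr.norm_map, EuclideanSpace.real_norm_sq_eq, PiLp.inner_apply]
  simp only [RCLike.inner_apply, conj_trivial, mul_comm]

lemma measurePreserving_repr_sub [FiniteDimensional ℝ E] [MeasurableSpace E] [BorelSpace E]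
    (μ : E) : MeasurePreserving (fun x i => b.repr (x - μ) i) :=
  (PiLp.volume_preserving_ofLp ι).comp
    (b.measurePreserving_repr.comp (measurePreserving_sub_right volume μ))

end InnerProductSpace

section Spectral

variable {d : ℕ} {S : Matrix (Fin d) (Fin d) ℝ}

lemma matOpNorm_smul {η : ℝ} (hη : 0 ≤ η) (A : Matrix (Fin d) (Fin d) ℝ) :
    matOpNorm (η • A) = η * matOpNorm A := by
  rw [matOpNorm, map_smul, map_smul, norm_smul, norm_of_nonneg hη, matOpNorm]

lemma toEuclideanLin_eigenvectorBasis (hS : S.IsHermitian) (i : Fin d) :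
    Matrix.toEuclideanLin S (hS.eigenvectorBasis i)
      = hS.eigenvalues i • hS.eigenvectorBasis i := by
  rw [Matrix.toLpLin_apply, hS.mulVec_eigenvectorBasis]
  rfl

lemma eigenvalues_le_matOpNorm (hS : S.IsHermitian) (i : Fin d) :
    hS.eigenvalues i ≤ matOpNorm S := by
  have h := (LinearMap.toContinuousLinearMap (Matrix.toEuclideanLin S)).le_opNorm
    (hS.eigenvectorBasis i)
  rw [LinearMap.coe_toContinuousLinearMap', toEuclideanLin_eigenvectorBasis hS, norm_smul,
    hS.eigenvectorBasis.norm_eq_one, mul_one, mul_one] at h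
  exact (le_abs_self _).trans h

lemma trace_le_card_mul_matOpNorm (hS : S.IsHermitian) : S.trace ≤ d * matOpNorm S := by
  calc S.trace = ∑ i, hS.eigenvalues i := hS.trace_eq_sum_eigenvalues
    _ ≤ ∑ _i : Fin d, matOpNorm S := Finset.sum_le_sum fun i _ => eigenvalues_le_matOpNorm hS i
    _ = d * matOpNorm S := by
      rw [Finset.sum_const, Finset.card_univ, Fintype.card_fin, nsmul_eq_mul]

lemma toEuclideanLin_inv_eigenvectorBasis (hS : S.PosDef) (i : Fin d) :
    Matrix.toEuclideanLin S⁻¹ (hS.1.eigenvectorBasis i)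
      = (hS.1.eigenvalues i)⁻¹ • hS.1.eigenvectorBasis i := by
  have h : Matrix.toEuclideanLin S⁻¹ (Matrix.toEuclideanLin S (hS.1.eigenvectorBasis i))
      = hS.1.eigenvectorBasis i := by
    rw [← LinearMap.comp_apply, ← Matrix.toLpLin_mul_same,
      Matrix.nonsing_inv_mul _ hS.det_pos.ne'.isUnit, Matrix.toLpLin_one, LinearMap.id_apply]
  rw [toEuclideanLin_eigenvectorBasis hS.1, map_smul] at h
  rw [eq_inv_smul_iff₀ (hS.eigenvalues_pos i).ne', h]

lemma inner_toEuclideanLin_inv_self (hS : S.PosDef) (z : EuclideanSpace ℝ (Fin d)) :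
    ⟪z, Matrix.toEuclideanLin S⁻¹ z⟫
      = ∑ i, (hS.1.eigenvalues i)⁻¹ * hS.1.eigenvectorBasis.repr z i ^ 2 := by
  rw [← hS.1.eigenvectorBasis.sum_inner_mul_inner z]
  refine Finset.sum_congr rfl fun i _ => ?_
  rw [← (Matrix.isSymmetric_toEuclideanLin_iff.2 hS.1.inv) (hS.1.eigenvectorBasis i) z,
    toEuclideanLin_inv_eigenvectorBasis hS, real_inner_smul_left,
    hS.1.eigenvectorBasis.repr_apply_apply, real_inner_comm]
  ring

end Spectral

section GaussianMeasure

variable {d : ℕ} {S : Matrix (Fin d) (Fin d) ℝ} {μ : EuclideanSpace ℝ (Fin d)}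

lemma gaussianDensity_eq_prod_gaussianPDFReal (hS : S.PosDef) (z : EuclideanSpace ℝ (Fin d)) :
    √((2 * π) ^ d * S.det)⁻¹ * exp (-⟪z, Matrix.toEuclideanLin S⁻¹ z⟫ / 2)
      = ∏ i, gaussianPDFReal 0 (hS.1.eigenvalues i).toNNReal
          (hS.1.eigenvectorBasis.repr z i) := by
  have h_nonneg : ∀ i, 0 ≤ hS.1.eigenvalues i := fun i => (hS.eigenvalues_pos i).le
  have h_det : (2 * π) ^ d * S.det = ∏ i, 2 * π * hS.1.eigenvalues i := by
    rw [Finset.prod_mul_distrib, hS.1.det_eq_prod_eigenvalues, Finset.prod_const,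
      Finset.card_univ, Fintype.card_fin]
    rfl
  simp only [gaussianPDFReal, coe_toNNReal _ (h_nonneg _), sub_zero]
  rw [Finset.prod_mul_distrib, ← exp_sum, h_det, sqrt_inv,
    sqrt_prod _ fun i _ => mul_nonneg two_pi_pos.le (h_nonneg i), Finset.prod_inv_distrib,
    inner_toEuclideanLin_inv_self hS, neg_div, Finset.sum_div, ← Finset.sum_neg_distrib]
  congr 2
  refine Finset.sum_congr rfl fun i _ => ?_
  rw [mul_comm 2, div_mul_eq_div_div, neg_div, neg_div, div_eq_inv_mul (_ ^ 2)]

lemma measurePreserving_repr_sub_gaussianMeasure (hS : S.PosDef) (μ : EuclideanSpace ℝ (Fin d)) :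
    MeasurePreserving (fun x i => hS.1.eigenvectorBasis.repr (x - μ) i) (gaussianMeasure μ S)
      (Measure.pi fun i => gaussianReal 0 (hS.1.eigenvalues i).toNNReal) := by
  have h_meas : Measurable fun y : Fin d → ℝ =>
      ENNReal.ofReal (∏ i, gaussianPDFReal 0 (hS.1.eigenvalues i).toNNReal (y i)) := by
    fun_prop
  have h_lebesgue := measurePreserving_withDensity_comp
    (measurePreserving_repr_sub hS.1.eigenvectorBasis μ) h_meas
  rw [gaussianMeasure, pi_gaussianReal fun i => (toNNReal_pos.2 (hS.eigenvalues_pos i)).ne']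
  simp_rw [gaussianDensity_eq_prod_gaussianPDFReal hS]
  exact h_lebesgue

variable {a : ℝ} (w : EuclideanSpace ℝ (Fin d))

lemma integrable_exp_quadratic_gaussianMeasure (hS : S.PosDef) (ha : 0 ≤ a)
    (haS : a * matOpNorm S < 1) :
    Integrable (fun x => exp (⟪w, x - μ⟫ + a * ‖x - μ‖ ^ 2 / 2)) (gaussianMeasure μ S) := by
  simp_rw [exp_inner_add_sq_eq_prod hS.1.eigenvectorBasis]
  have h_pi : Integrable (fun y : Fin d → ℝ =>
      ∏ i, exp (hS.1.eigenvectorBasis.repr w i * y i + a * y i ^ 2 / 2))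
      (Measure.pi fun i => gaussianReal 0 (hS.1.eigenvalues i).toNNReal) := by
    refine Integrable.fintype_prod fun i => integrable_exp_quadratic_gaussianReal ?_
    rw [coe_toNNReal _ (hS.eigenvalues_pos i).le]
    exact (mul_le_mul_of_nonneg_left (eigenvalues_le_matOpNorm hS.1 i) ha).trans_lt haS
  exact ((measurePreserving_repr_sub_gaussianMeasure hS μ).integrable_comp_of_integrable h_pi :)

lemma integral_exp_quadratic_gaussianMeasure (hS : S.PosDef) :
    ∫ x, exp (⟪w, x - μ⟫ + a * ‖x - μ‖ ^ 2 / 2) ∂(gaussianMeasure μ S)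
      = ∏ i, ∫ t, exp (hS.1.eigenvectorBasis.repr w i * t + a * t ^ 2 / 2)
          ∂(gaussianReal 0 (hS.1.eigenvalues i).toNNReal) := by
  have h_coord := measurePreserving_repr_sub_gaussianMeasure hS μ
  simp_rw [exp_inner_add_sq_eq_prod hS.1.eigenvectorBasis]
  rw [← integral_fintype_prod_eq_prod, ← h_coord.map_eq,
    integral_map h_coord.aemeasurable (by fun_prop)]

lemma integral_exp_quadratic_gaussianMeasure_le (hS : S.PosDef) (ha : 0 ≤ a)
    (haS : a * matOpNorm S < 1) :
    ∫ x, exp (⟪w, x - μ⟫ + a * ‖x - μ‖ ^ 2 / 2) ∂(gaussianMeasure μ S)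
      ≤ exp ((a * S.trace + matOpNorm S * ‖w‖ ^ 2) / (2 * (1 - a * matOpNorm S))) := by
  set v := hS.1.eigenvalues
  set c := hS.1.eigenvectorBasis.repr w
  have hv_nonneg : ∀ i, 0 ≤ v i := fun i => (hS.eigenvalues_pos i).le
  have hv_le : ∀ i, v i ≤ matOpNorm S := eigenvalues_le_matOpNorm hS.1
  have h_factor : ∀ i, ∫ t, exp (c i * t + a * t ^ 2 / 2) ∂(gaussianReal 0 (v i).toNNReal)
      ≤ exp ((a * v i + matOpNorm S * c i ^ 2) / (2 * (1 - a * matOpNorm S))) := fun i => by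
    have hav : a * v i ≤ a * matOpNorm S := mul_le_mul_of_nonneg_left (hv_le i) ha
    have h_real := integral_exp_quadratic_gaussianReal_le (a := a) (c := c i)
      (v := (v i).toNNReal) (by rw [coe_toNNReal _ (hv_nonneg i)]; exact hav.trans_lt haS)
    rw [coe_toNNReal _ (hv_nonneg i)] at h_real
    have hv_i := hv_nonneg i
    have h_op := hv_i.trans (hv_le i)
    refine h_real.trans (exp_le_exp.2 ?_)
    gcongr
    exact hv_le i
  have h_trace : S.trace = ∑ i, v i := hS.1.trace_eq_sum_eigenvalues
  have h_norm : ‖w‖ ^ 2 = ∑ i, c i ^ 2 := by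
    rw [← hS.1.eigenvectorBasis.repr.norm_map, EuclideanSpace.real_norm_sq_eq]
  rw [integral_exp_quadratic_gaussianMeasure w hS, h_trace, h_norm, Finset.mul_sum, Finset.mul_sum,
    ← Finset.sum_add_distrib, Finset.sum_div, exp_sum]
  exact Finset.prod_le_prod (fun i _ => integral_nonneg fun t => (exp_pos _).le)
    fun i _ => h_factor i

lemma integrable_exp_norm_gaussianMeasure (hS : S.PosDef) (hSμ : matOpNorm S < ‖μ‖) :
    Integrable (fun x => exp ‖x‖) (gaussianMeasure μ S) := by
  have hμ_pos : 0 < ‖μ‖ := (norm_nonneg _).trans_lt hSμ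
  have h_op : ‖μ‖⁻¹ * matOpNorm S < 1 := (inv_mul_lt_one₀ hμ_pos).2 hSμ
  refine ((integrable_exp_quadratic_gaussianMeasure (‖μ‖⁻¹ • μ) hS (by positivity) h_op).const_mul
    (exp ‖μ‖)).mono' (by fun_prop) (ae_of_all _ fun x => ?_)
  rw [norm_of_nonneg (exp_pos _).le]
  exact exp_norm_le_mul_exp_quadratic (norm_pos_iff.1 hμ_pos) x

lemma integral_exp_norm_gaussianMeasure_le (hS : S.PosDef) (hSμ : matOpNorm S < ‖μ‖) :
    ∫ x, exp ‖x‖ ∂(gaussianMeasure μ S)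
      ≤ exp (‖μ‖ + (S.trace + ‖μ‖ * matOpNorm S) / (2 * (‖μ‖ - matOpNorm S))) := by
  have hμ_pos : 0 < ‖μ‖ := (norm_nonneg _).trans_lt hSμ
  have hμ : μ ≠ 0 := norm_pos_iff.1 hμ_pos
  have h_op : ‖μ‖⁻¹ * matOpNorm S < 1 := (inv_mul_lt_one₀ hμ_pos).2 hSμ
  have h_unit : ‖‖μ‖⁻¹ • μ‖ = 1 := norm_smul_inv_norm (𝕜 := ℝ) hμ
  calc ∫ x, exp ‖x‖ ∂(gaussianMeasure μ S)
      ≤ ∫ x, exp ‖μ‖ * exp (⟪‖μ‖⁻¹ • μ, x - μ⟫ + ‖μ‖⁻¹ * ‖x - μ‖ ^ 2 / 2)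
          ∂(gaussianMeasure μ S) :=
        integral_mono (integrable_exp_norm_gaussianMeasure hS hSμ)
          ((integrable_exp_quadratic_gaussianMeasure _ hS (by positivity) h_op).const_mul _)
          (exp_norm_le_mul_exp_quadratic hμ)
    _ ≤ exp ‖μ‖ * exp ((‖μ‖⁻¹ * S.trace + matOpNorm S * ‖‖μ‖⁻¹ • μ‖ ^ 2)
          / (2 * (1 - ‖μ‖⁻¹ * matOpNorm S))) := by
        rw [integral_const_mul]
        gcongr
        exact integral_exp_quadratic_gaussianMeasure_le _ hS (by positivity) h_op
    _ = exp (‖μ‖ + (S.trace + ‖μ‖ * matOpNorm S) / (2 * (‖μ‖ - matOpNorm S))) := by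
        rw [h_unit, ← exp_add]
        congr 2
        have h_sub : ‖μ‖ - matOpNorm S ≠ 0 := (sub_pos.2 hSμ).ne'
        field_simp

end GaussianMeasure

lemma add_div_sub_le_add_div_sub {n m r σ κ : ℝ} (hnσ : 0 ≤ n + σ) (hσκ : σ ≤ κ) (hκr : κ < r)
    (hrm : r ≤ m) : (n + m) / (m - σ) ≤ (n + r) / (r - κ) := by
  have hκ : 0 < r - κ := sub_pos.2 hκr
  have hσ : 0 < m - σ := by linarith
  calc (n + m) / (m - σ) = 1 + (n + σ) / (m - σ) := by field_simp; ring
    _ ≤ 1 + (n + κ) / (r - κ) := by gcongr; linarith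
    _ = (n + r) / (r - κ) := by field_simp; ring

theorem stmt1_general {d : ℕ} {r κ M η : ℝ} (hκr : κ < r) {μ : EuclideanSpace ℝ (Fin d)}
    {Γ : Matrix (Fin d) (Fin d) ℝ} (hμ : r ≤ ‖μ‖) (hη : 0 < η) (hΓ : Γ.PosDef)
    (hΓM : matOpNorm Γ ≤ M) (hηΓ : η * matOpNorm Γ ≤ κ) :
    Integrable (fun x => exp ‖x‖) (gaussianMeasure μ (η • Γ)) ∧
      ∫ x, exp ‖x‖ ∂(gaussianMeasure μ (η • Γ))
        ≤ exp (‖μ‖ + M * (d + r) / (2 * (r - κ)) * η) := by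
  have hS : (η • Γ).PosDef := hΓ.smul hη
  have h_op : matOpNorm (η • Γ) = η * matOpNorm Γ := matOpNorm_smul hη.le Γ
  have h_op_nonneg : 0 ≤ η * matOpNorm Γ := mul_nonneg hη.le (norm_nonneg _)
  have hSμ : matOpNorm (η • Γ) < ‖μ‖ := by linarith
  refine ⟨integrable_exp_norm_gaussianMeasure hS hSμ,
    (integral_exp_norm_gaussianMeasure_le hS hSμ).trans (exp_le_exp.2 ?_)⟩
  have h_trace := trace_le_card_mul_matOpNorm hS.1
  rw [h_op] at h_trace hSμ ⊢
  gcongr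
  calc ((η • Γ).trace + ‖μ‖ * (η * matOpNorm Γ)) / (2 * (‖μ‖ - η * matOpNorm Γ))
      ≤ (d * (η * matOpNorm Γ) + ‖μ‖ * (η * matOpNorm Γ)) / (2 * (‖μ‖ - η * matOpNorm Γ)) :=
        div_le_div_of_nonneg_right (add_le_add_left h_trace _) (by linarith)
    _ = η * matOpNorm Γ / 2 * ((d + ‖μ‖) / (‖μ‖ - η * matOpNorm Γ)) := by
        rw [← add_mul, mul_comm, mul_div_mul_comm]
    _ ≤ η * matOpNorm Γ / 2 * ((d + r) / (r - κ)) := by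
        gcongr ?_ * ?_
        exact add_div_sub_le_add_div_sub (add_nonneg d.cast_nonneg h_op_nonneg) hηΓ hκr hμ
    _ ≤ η * M / 2 * ((d + r) / (r - κ)) := by
        have h_ratio : 0 ≤ ((d : ℝ) + r) / (r - κ) :=
          div_nonneg (by linarith [d.cast_nonneg (α := ℝ)]) (sub_pos.2 hκr).le
        gcongr
    _ = M * (d + r) / (2 * (r - κ)) * η := by
        rw [← mul_div_mul_comm]
        ring

theorem stmt1 (d : ℕ) (hd : 1 ≤ d) (M : ℝ) (hM : 0 < M) :
    ∃ C > 0, ∀ (μ : EuclideanSpace ℝ (Fin d)) (η : ℝ) (Γ : Matrix (Fin d) (Fin d) ℝ),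
      2 / 3 ≤ ‖μ‖ → 0 < η → Γ.IsSymm → Γ.PosDef → matOpNorm Γ ≤ M →
      η * matOpNorm Γ ≤ 1 / 6 →
      ∫ x in {y : EuclideanSpace ℝ (Fin d) | ‖y - μ‖ < 1 / 3},
          Real.exp ‖x‖ ∂(gaussianMeasure μ (η • Γ)) ≤ Real.exp (‖μ‖ + C * η) := by
  refine ⟨M * (d + 2 / 3) / (2 * (2 / 3 - 1 / 6)), by norm_num; positivity,
    fun μ η Γ hμ hη _ hΓ hΓM hηΓ => ?_⟩
  obtain ⟨h_int, h_le⟩ := stmt1_general (by norm_num) hμ hη hΓ hΓM hηΓ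
  exact (setIntegral_le_integral h_int (ae_of_all _ fun x => (exp_pos _).le)).trans h_le
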